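/- arXiv:2403.13757 — 2 statements merged into one kernel-verified Lean document; each statement's English description precedes it below -/
import Mathlib

section
/- Fix w ∈ (0, 1) and let ρ = (1 − √(1−w))/(1 + √(1−w)). Then as h → ∞ through positive reals, k_h(w) := w^h ₂F₁(h, h; 2h; w) satisfies k_h(w) / [(4ρ)^h / √(1−ρ²)] → 1. -/
/-!
Substituting `t = (1 - cos θ) / 2` in Euler's integral turns `₂F₁(h, h; 2h; w)` into the mean of
`(1 - w (1 - cos θ) / 2) ^ (-h)` over `[0, π]` with weight `sin θ ^ (2h - 1)`. Both the weight and
the integrand depend on `h`, but for `w = 4ρ / (1 + ρ)²` Landen's substitution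
`θ ↦ θ + arcsin (ρ sin θ)` makes the `h`-dependence of the integrand cancel against the change of
the weight. What remains is exactly `(4ρ) ^ h / w ^ h` times the mean of `1 / √(1 - ρ² sin² θ)`.
Under the weight `sin ^ s` the mean of `cos²` is `1 / (s + 2)`, so by Chebyshev's inequality the
weight concentrates at `θ = π / 2`, where the integrand is `1 / √(1 - ρ²)`.
-/

open Filter Topology

/-- The Gauss hypergeometric function `₂F₁(a,b;c;x)`, defined by its power series. -/
noncomputable def twoF1 (a b c x : ℝ) : ℝ :=
  ∑' n : ℕ, (Real.Gamma (a + n) * Real.Gamma (b + n) * Real.Gamma c) /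
      (Real.Gamma a * Real.Gamma b * Real.Gamma (c + n) * n.factorial) * x ^ n

section

open MeasureTheory Real Set
open ProbabilityTheory (beta beta_pos beta_eq_betaIntegralReal)

lemma ofReal_rpow_mul_one_sub_rpow {t : ℝ} (ht : t ∈ Icc 0 1) (a b : ℝ) :
    ((t ^ (a - 1) * (1 - t) ^ (b - 1) : ℝ) : ℂ) =
      (t : ℂ) ^ ((a : ℂ) - 1) * (1 - (t : ℂ)) ^ ((b : ℂ) - 1) := by
  push_cast [Complex.ofReal_cpow ht.1, Complex.ofReal_cpow (sub_nonneg.2 ht.2)]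
  rfl

lemma intervalIntegrable_rpow_mul_one_sub_rpow {a b : ℝ} (ha : 0 < a) (hb : 0 < b) :
    IntervalIntegrable (fun t : ℝ => t ^ (a - 1) * (1 - t) ^ (b - 1)) volume 0 1 := by
  have hcomplex := Complex.betaIntegral_convergent (u := a) (v := b) (by simpa) (by simpa)
  refine hcomplex.norm.congr fun t ht => ?_
  rw [uIoc_of_le zero_le_one] at ht
  have hnonneg : 0 ≤ t ^ (a - 1) * (1 - t) ^ (b - 1) :=
    mul_nonneg (rpow_nonneg ht.1.le _) (rpow_nonneg (sub_nonneg.2 ht.2) _)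
  simp only [← ofReal_rpow_mul_one_sub_rpow (Ioc_subset_Icc_self ht), Complex.norm_real,
    norm_of_nonneg hnonneg]

lemma integral_rpow_mul_one_sub_rpow {a b : ℝ} (ha : 0 < a) (hb : 0 < b) :
    ∫ t in (0 : ℝ)..1, t ^ (a - 1) * (1 - t) ^ (b - 1) = beta a b := by
  rw [beta_eq_betaIntegralReal a b ha hb, Complex.betaIntegral,
    ← Complex.ofReal_re (∫ t in (0 : ℝ)..1, t ^ (a - 1) * (1 - t) ^ (b - 1)),
    ← intervalIntegral.integral_ofReal]
  refine congrArg Complex.re (intervalIntegral.integral_congr fun t ht => ?_)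
  exact ofReal_rpow_mul_one_sub_rpow (uIcc_of_le (zero_le_one' ℝ) ▸ ht) a b

lemma Gamma_add_nat_div_Gamma {a : ℝ} (ha : ∀ m : ℕ, a ≠ -m) (n : ℕ) :
    Gamma (a + n) / Gamma a = (ascPochhammer ℝ n).eval a := by
  have hcomplex := Complex.Gamma_add_nat_div_Gamma_eq (n := n) (a : ℂ) fun k => mod_cast ha k
  have hcast := Polynomial.eval_map_apply (p := ascPochhammer ℝ n) (f := Complex.ofRealHom) a
  rw [ascPochhammer_map, Complex.ofRealHom_eq_coe, Complex.ofRealHom_eq_coe] at hcast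
  rw [hcast, ← Complex.ofReal_natCast, ← Complex.ofReal_add, Complex.Gamma_ofReal,
    Complex.Gamma_ofReal] at hcomplex
  exact_mod_cast hcomplex

lemma choose_add_sub_one_eq_Gamma_div {a : ℝ} (ha : ∀ m : ℕ, a ≠ -m) (n : ℕ) :
    Ring.choose (a + n - 1) n = Gamma (a + n) / (Gamma a * n.factorial) := by
  rw [← Ring.multichoose_eq, ← div_div, Gamma_add_nat_div_Gamma ha, eq_div_iff (by positivity),
    mul_comm, ← nsmul_eq_mul, Ring.factorial_nsmul_multichoose_eq_ascPochhammer,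
    Polynomial.ascPochhammer_smeval_eq_eval]

lemma hasSum_one_sub_rpow_neg {a x : ℝ} (ha : ∀ m : ℕ, a ≠ -m) (hx : |x| < 1) :
    HasSum (fun n : ℕ => Gamma (a + n) / (Gamma a * n.factorial) * x ^ n) ((1 - x) ^ (-a)) := by
  have h := (one_div_one_sub_rpow_hasFPowerSeriesOnBall_zero a).hasSum (y := x)
    (by simpa [enorm_eq_nnnorm, ← NNReal.coe_lt_coe] using hx)
  simp only [zero_add, FormalMultilinearSeries.ofScalars_apply_eq, smul_eq_mul,
    choose_add_sub_one_eq_Gamma_div ha] at h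
  rwa [rpow_neg (by linarith [le_abs_self x]), ← one_div]

lemma integral_rpow_mul_one_sub_rpow_mul_pow {a b : ℝ} (ha : 0 < a) (hb : 0 < b) (n : ℕ) :
    ∫ t in (0 : ℝ)..1, t ^ (a - 1) * (1 - t) ^ (b - 1) * t ^ n = beta (a + n) b := by
  rw [← integral_rpow_mul_one_sub_rpow (by positivity) hb]
  refine intervalIntegral.integral_congr_Ioo_of_le zero_le_one fun t ht => ?_
  simp only [show a + n - 1 = a - 1 + n by ring, rpow_add ht.1, rpow_natCast]
  ring

lemma hasSum_mul_beta {a b : ℝ} {k : ℕ → ℝ} {f : ℝ → ℝ} (ha : 0 < a) (hb : 0 < b)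
    (hk : Summable k) (hf : ∀ t ∈ Ioc (0 : ℝ) 1, HasSum (fun n => k n * t ^ n) (f t)) :
    HasSum (fun n => k n * beta (a + n) b)
      (∫ t in (0 : ℝ)..1, t ^ (a - 1) * (1 - t) ^ (b - 1) * f t) := by
  simp only [← integral_rpow_mul_one_sub_rpow_mul_pow ha hb,
    ← intervalIntegral.integral_const_mul, mul_left_comm (k _)]
  refine intervalIntegral.hasSum_integral_of_dominated_convergence
    (fun n t => t ^ (a - 1) * (1 - t) ^ (b - 1) * |k n|) (fun n => ?_) (fun n => ?_) ?_ ?_ ?_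
  · exact Measurable.aestronglyMeasurable (by fun_prop)
  · refine .of_forall fun t ht => ?_
    rw [uIoc_of_le zero_le_one] at ht
    have hweight : 0 ≤ t ^ (a - 1) * (1 - t) ^ (b - 1) :=
      mul_nonneg (rpow_nonneg ht.1.le _) (rpow_nonneg (sub_nonneg.2 ht.2) _)
    rw [norm_mul, norm_of_nonneg hweight, norm_mul, norm_of_nonneg (pow_nonneg ht.1.le n)]
    gcongr
    exact mul_le_of_le_one_right (norm_nonneg _) (pow_le_one₀ ht.1.le ht.2)
  · exact .of_forall fun t _ => hk.abs.mul_left _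
  · simp only [tsum_mul_left]
    exact (intervalIntegrable_rpow_mul_one_sub_rpow ha hb).mul_const _
  · exact .of_forall fun t ht => (hf t (uIoc_of_le (zero_le_one' ℝ) ▸ ht)).mul_left _

theorem beta_mul_twoF1 {a b c x : ℝ} (ha : ∀ m : ℕ, a ≠ -m) (hb : 0 < b) (hbc : b < c)
    (hx : |x| < 1) :
    beta b (c - b) * twoF1 a b c x =
      ∫ t in (0 : ℝ)..1, t ^ (b - 1) * (1 - t) ^ (c - b - 1) * (1 - x * t) ^ (-a) := by
  have hbinomial (t : ℝ) (ht : t ∈ Ioc 0 1) :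
      HasSum (fun n : ℕ => Gamma (a + n) / (Gamma a * n.factorial) * x ^ n * t ^ n)
        ((1 - x * t) ^ (-a)) := by
    have hxt : |x * t| < 1 := by
      rw [abs_mul, abs_of_pos ht.1]
      exact (mul_le_of_le_one_right (abs_nonneg x) ht.2).trans_lt hx
    simpa only [mul_pow, mul_assoc] using hasSum_one_sub_rpow_neg ha hxt
  have hseries := hasSum_mul_beta hb (sub_pos.2 hbc) (hasSum_one_sub_rpow_neg ha hx).summable
    hbinomial
  rw [← hseries.tsum_eq, twoF1, ← tsum_mul_left]
  refine tsum_congr fun n => ?_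
  have hΓb : Gamma b ≠ 0 := (Gamma_pos_of_pos hb).ne'
  have hΓc : Gamma c ≠ 0 := (Gamma_pos_of_pos (hb.trans hbc)).ne'
  rw [beta, beta, add_sub_cancel, show b + n + (c - b) = c + n by ring]
  field_simp

theorem integral_sin_rpow_mul_comp_one_sub_cos (h : ℝ) (g : ℝ → ℝ) :
    ∫ θ in (0 : ℝ)..π, sin θ ^ (2 * h - 1) * g ((1 - cos θ) / 2) =
      4 ^ h / 2 * ∫ t in (0 : ℝ)..1, t ^ (h - 1) * (1 - t) ^ (h - 1) * g t := by
  have hsubst := intervalIntegral.integral_comp_mul_deriv_of_deriv_nonneg (a := 0) (b := π)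
    (f := fun θ => (1 - cos θ) / 2) (f' := fun θ => sin θ / 2)
    (g := fun t => t ^ (h - 1) * (1 - t) ^ (h - 1) * g t) (by fun_prop)
    (fun θ _ => by simpa using ((hasDerivAt_cos θ).const_sub 1).div_const 2)
    (fun θ hθ => by
      rw [min_eq_left pi_pos.le, max_eq_right pi_pos.le] at hθ
      exact div_nonneg (sin_pos_of_mem_Ioo hθ).le zero_le_two)
  simp only [Function.comp_apply, cos_zero, cos_pi, sub_self, zero_div, sub_neg_eq_add,
    one_add_one_eq_two, div_self (two_ne_zero' ℝ)] at hsubst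
  rw [← hsubst, ← intervalIntegral.integral_const_mul]
  refine intervalIntegral.integral_congr_Ioo_of_le pi_pos.le fun θ hθ => ?_
  have hsin : 0 < sin θ := sin_pos_of_mem_Ioo hθ
  have hcos : 0 ≤ (1 - cos θ) / 2 ∧ 0 ≤ 1 - (1 - cos θ) / 2 := by
    constructor <;> linarith [neg_one_le_cos θ, cos_le_one θ]
  have hprod : (1 - cos θ) / 2 * (1 - (1 - cos θ) / 2) = sin θ ^ 2 / 4 := by
    linear_combination -sin_sq_add_cos_sq θ / 4
  have hsq : (sin θ ^ 2) ^ (h - 1) * sin θ = sin θ ^ (2 * h - 1) := by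
    rw [← rpow_natCast_mul hsin.le, ← rpow_add_one hsin.ne']
    congr 1
    push_cast
    ring
  have hfour : (4 : ℝ) ^ h = 4 ^ (h - 1) * 4 := by
    rw [← rpow_add_one four_ne_zero, sub_add_cancel]
  rw [← mul_rpow hcos.1 hcos.2, hprod, div_rpow (sq_nonneg _) zero_le_four, ← hsq, hfour]
  field_simp
  ring

/-- The mean of `f` over `[0, π]` with respect to the weight `sin ^ s`. -/
noncomputable def sinMean (s : ℝ) (f : ℝ → ℝ) : ℝ :=
  (∫ θ in (0 : ℝ)..π, sin θ ^ s * f θ) / ∫ θ in (0 : ℝ)..π, sin θ ^ s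

lemma sinMean_const_mul (s c : ℝ) (f : ℝ → ℝ) :
    sinMean s (fun θ => c * f θ) = c * sinMean s f := by
  simp only [sinMean, mul_left_comm _ c, intervalIntegral.integral_const_mul, mul_div_assoc]

theorem twoF1_eq_sinMean {h x : ℝ} (hh : 0 < h) (hx : |x| < 1) :
    twoF1 h h (2 * h) x =
      sinMean (2 * h - 1) fun θ => (1 - x * ((1 - cos θ) / 2)) ^ (-h) := by
  have hbeta := beta_pos hh hh
  have hpole (m : ℕ) : h ≠ -m := by have := m.cast_nonneg (α := ℝ); linarith
  have hnum := integral_sin_rpow_mul_comp_one_sub_cos h fun t => (1 - x * t) ^ (-h)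
  have hden := integral_sin_rpow_mul_comp_one_sub_cos h fun _ => 1
  have heuler := beta_mul_twoF1 (c := 2 * h) hpole hh (by linarith) hx
  rw [show 2 * h - h = h by ring] at heuler
  simp only [mul_one, integral_rpow_mul_one_sub_rpow hh hh] at hden
  rw [sinMean, hnum, hden, ← heuler]
  field_simp

section SinMean

variable {s : ℝ}

lemma continuous_sin_rpow (hs : 0 ≤ s) : Continuous fun θ => sin θ ^ s :=
  continuous_sin.rpow_const fun _ => Or.inr hs

lemma integral_sin_rpow_pos (hs : 0 ≤ s) : 0 < ∫ θ in (0 : ℝ)..π, sin θ ^ s :=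
  intervalIntegral.intervalIntegral_pos_of_pos_on
    ((continuous_sin_rpow hs).intervalIntegrable _ _)
    (fun _ hθ => rpow_pos_of_pos (sin_pos_of_mem_Ioo hθ) _) pi_pos

lemma integral_sin_rpow_mul_cos_sq (hs : 0 ≤ s) :
    ∫ θ in (0 : ℝ)..π, sin θ ^ s * cos θ ^ 2 = (∫ θ in (0 : ℝ)..π, sin θ ^ s) / (s + 2) := by
  have hcont := continuous_sin_rpow hs
  have hcont_cos_sq : Continuous fun θ => sin θ ^ s * cos θ ^ 2 := by fun_prop
  have hderiv (θ : ℝ) (hθ : θ ∈ uIcc 0 π) :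
      HasDerivAt (fun θ => sin θ ^ (s + 1) * cos θ)
        ((s + 2) * (sin θ ^ s * cos θ ^ 2) - sin θ ^ s) θ := by
    have hsin : 0 ≤ sin θ := sin_nonneg_of_mem_Icc (uIcc_of_le pi_pos.le ▸ hθ)
    convert! ((hasDerivAt_sin θ).rpow_const (p := s + 1) (Or.inr (by linarith))).mul
      (hasDerivAt_cos θ) using 1
    rw [rpow_add_one' hsin (by linarith), add_sub_cancel_right]
    linear_combination sin θ ^ s * sin_sq_add_cos_sq θ
  have hparts := intervalIntegral.integral_eq_sub_of_hasDerivAt hderiv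
    (Continuous.intervalIntegrable (by fun_prop) 0 π)
  rw [intervalIntegral.integral_sub
    ((hcont_cos_sq.const_mul _).intervalIntegrable _ _) (hcont.intervalIntegrable _ _),
    intervalIntegral.integral_const_mul, sin_zero, sin_pi, zero_rpow (by linarith)] at hparts
  rw [eq_div_iff (by linarith)]
  linarith

lemma integral_sin_rpow_mul_add_mul_cos_sq (hs : 0 ≤ s) (ε C : ℝ) :
    ∫ θ in (0 : ℝ)..π, sin θ ^ s * (ε + C * cos θ ^ 2) =
      (ε + C / (s + 2)) * ∫ θ in (0 : ℝ)..π, sin θ ^ s := by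
  have hcont := continuous_sin_rpow hs
  have hcont_cos_sq : Continuous fun θ => sin θ ^ s * cos θ ^ 2 := by fun_prop
  simp only [mul_add, mul_left_comm _ C]
  rw [intervalIntegral.integral_add ((hcont.mul_const ε).intervalIntegrable _ _)
      ((hcont_cos_sq.const_mul C).intervalIntegrable _ _), intervalIntegral.integral_mul_const,
    intervalIntegral.integral_const_mul, integral_sin_rpow_mul_cos_sq hs]
  ring

lemma abs_sinMean_sub_le {f : ℝ → ℝ} {l ε C : ℝ} (hs : 0 ≤ s) (hf : ContinuousOn f (Icc 0 π))
    (hfl : ∀ θ ∈ Icc 0 π, |f θ - l| ≤ ε + C * cos θ ^ 2) :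
    |sinMean s f - l| ≤ ε + C / (s + 2) := by
  have hcont := continuous_sin_rpow hs
  have hpos := integral_sin_rpow_pos hs
  have hint : IntervalIntegrable (fun θ => sin θ ^ s * f θ) volume 0 π :=
    (hcont.continuousOn.mul (uIcc_of_le pi_pos.le ▸ hf)).intervalIntegrable
  have hmajorant : Continuous fun θ => sin θ ^ s * (ε + C * cos θ ^ 2) := by fun_prop
  have hbound : |∫ θ in (0 : ℝ)..π, sin θ ^ s * (f θ - l)| ≤
      ∫ θ in (0 : ℝ)..π, sin θ ^ s * (ε + C * cos θ ^ 2) := by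
    rw [← norm_eq_abs]
    refine intervalIntegral.norm_integral_le_of_norm_le pi_pos.le (.of_forall fun θ hθ => ?_)
      (hmajorant.intervalIntegrable _ _)
    have hθ' := Ioc_subset_Icc_self hθ
    have hweight : 0 ≤ sin θ ^ s := rpow_nonneg (sin_nonneg_of_mem_Icc hθ') _
    rw [norm_mul, norm_of_nonneg hweight]
    exact mul_le_mul_of_nonneg_left (hfl θ hθ') hweight
  have hleft : ∫ θ in (0 : ℝ)..π, sin θ ^ s * (f θ - l) =
      (sinMean s f - l) * ∫ θ in (0 : ℝ)..π, sin θ ^ s := by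
    simp only [mul_sub]
    rw [intervalIntegral.integral_sub hint ((hcont.mul_const l).intervalIntegrable _ _),
      intervalIntegral.integral_mul_const, sub_mul, sinMean, div_mul_cancel₀ _ hpos.ne', mul_comm l]
  rw [hleft, integral_sin_rpow_mul_add_mul_cos_sq hs, abs_mul, abs_of_pos hpos] at hbound
  exact le_of_mul_le_mul_right hbound hpos

end SinMean

lemma exists_lt_mul_of_isCompact {X : Type*} [TopologicalSpace X] {K : Set X} {f g : X → ℝ}
    (hK : IsCompact K) (hf : ContinuousOn f K) (hg : ContinuousOn g K)
    (hg0 : ∀ x ∈ K, 0 ≤ g x) (hfg : ∀ x ∈ K, g x = 0 → f x < 0) :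
    ∃ C, ∀ x ∈ K, f x < C * g x := by
  suffices h : ∃ C, ∀ x ∈ K, x ∈ K → f x < C * g x from
    h.imp fun C hC x hx => hC x hx hx
  refine hK.induction_on (p := fun t => ∃ C, ∀ x ∈ t, x ∈ K → f x < C * g x) (by simp)
    (fun _ _ hst ⟨C, hC⟩ => ⟨C, fun x hx => hC x (hst hx)⟩) ?_ fun x hx => ?_
  · rintro s t ⟨C, hC⟩ ⟨D, hD⟩
    refine ⟨max C D, fun x hxst hx => ?_⟩
    rcases hxst with hxs | hxt
    · exact (hC x hxs hx).trans_le (mul_le_mul_of_nonneg_right (le_max_left C D) (hg0 x hx))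
    · exact (hD x hxt hx).trans_le (mul_le_mul_of_nonneg_right (le_max_right C D) (hg0 x hx))
  · obtain ⟨C, hC⟩ : ∃ C, f x < C * g x := by
      rcases (hg0 x hx).eq_or_lt' with hzero | hpos
      · exact ⟨0, by simpa using hfg x hx hzero⟩
      · obtain ⟨C, hC⟩ := exists_gt (f x / g x)
        exact ⟨C, (div_lt_iff₀ hpos).1 hC⟩
    exact ⟨_, (hf x hx).eventually_lt ((hg x hx).const_mul C) hC, C, fun _ hy _ => hy⟩

theorem tendsto_sinMean_atTop {f : ℝ → ℝ} (hf : ContinuousOn f (Icc 0 π)) :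
    Tendsto (sinMean · f) atTop (𝓝 (f (π / 2))) := by
  rw [Metric.tendsto_nhds]
  intro ε hε
  have hcos_eq_zero (θ : ℝ) (hθ : θ ∈ Icc 0 π) (hcos : cos θ ^ 2 = 0) : θ = π / 2 :=
    injOn_cos hθ ⟨by positivity, by linarith [pi_pos]⟩
      (by rw [cos_pi_div_two, (pow_eq_zero_iff two_ne_zero).1 hcos])
  obtain ⟨C, hC⟩ := exists_lt_mul_of_isCompact (f := fun θ => |f θ - f (π / 2)| - ε / 2)
    (g := fun θ => cos θ ^ 2) isCompact_Icc (by fun_prop) (by fun_prop) (fun _ _ => sq_nonneg _)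
    fun θ hθ hcos => by simpa [hcos_eq_zero θ hθ hcos] using hε
  have hdecay : Tendsto (fun s => C / (s + 2)) atTop (𝓝 0) :=
    (tendsto_atTop_add_const_right _ _ tendsto_id).const_div_atTop C
  filter_upwards [eventually_ge_atTop 0, hdecay.eventually_lt_const (half_pos hε)] with s hs hsC
  calc dist (sinMean s f) (f (π / 2)) ≤ ε / 2 + C / (s + 2) :=
        abs_sinMean_sub_le hs hf fun θ hθ => by linarith [hC θ hθ]
    _ < ε := by linarith

/-- In a triangle `OAP` with `OA = r` and `OP = 1`, the length of `AP` when the angle at `A`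
is `θ`. -/
noncomputable def landenSide (r θ : ℝ) : ℝ :=
  √(1 - r ^ 2 * sin θ ^ 2) + r * cos θ

/-- Landen's substitution `θ ↦ θ + arcsin (r sin θ)`, sending the angle at `A` in the triangle of
`landenSide` to the exterior angle at `O`. -/
noncomputable def landenAngle (r θ : ℝ) : ℝ :=
  θ + arcsin (r * sin θ)

section Landen

variable {r : ℝ}

lemma abs_mul_sin_lt_one (hr : |r| < 1) (θ : ℝ) : |r * sin θ| < 1 := by
  rw [abs_mul]
  exact (mul_le_of_le_one_right (abs_nonneg r) (abs_sin_le_one θ)).trans_lt hr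

lemma one_sub_sq_mul_sin_sq_pos (hr : |r| < 1) (θ : ℝ) : 0 < 1 - r ^ 2 * sin θ ^ 2 := by
  rw [← mul_pow, sub_pos, sq_lt_one_iff_abs_lt_one]
  exact abs_mul_sin_lt_one hr θ

lemma landenSide_pos (hr : |r| < 1) (θ : ℝ) : 0 < landenSide r θ := by
  have hsq : (-(r * cos θ)) ^ 2 < 1 - r ^ 2 * sin θ ^ 2 := by
    linear_combination (sq_lt_one_iff_abs_lt_one r).2 hr + r ^ 2 * sin_sq_add_cos_sq θ
  rw [landenSide]
  linarith [lt_sqrt_of_sq_lt hsq]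

lemma sin_landenAngle (hr : |r| < 1) (θ : ℝ) :
    sin (landenAngle r θ) = sin θ * landenSide r θ := by
  have h := abs_lt.1 (abs_mul_sin_lt_one hr θ)
  rw [landenAngle, landenSide, sin_add, cos_arcsin, sin_arcsin h.1.le h.2.le, mul_pow]
  ring

lemma one_add_sq_add_two_mul_cos_landenAngle (hr : |r| < 1) (θ : ℝ) :
    1 + r ^ 2 + 2 * r * cos (landenAngle r θ) = landenSide r θ ^ 2 := by
  have h := abs_lt.1 (abs_mul_sin_lt_one hr θ)
  rw [landenAngle, landenSide, cos_add, cos_arcsin, sin_arcsin h.1.le h.2.le, mul_pow]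
  linear_combination -sq_sqrt (one_sub_sq_mul_sin_sq_pos hr θ).le - r ^ 2 * sin_sq_add_cos_sq θ

lemma hasDerivAt_landenAngle (hr : |r| < 1) (θ : ℝ) :
    HasDerivAt (landenAngle r) (landenSide r θ / √(1 - r ^ 2 * sin θ ^ 2)) θ := by
  have h := abs_lt.1 (abs_mul_sin_lt_one hr θ)
  have hroot := (sqrt_pos.2 (one_sub_sq_mul_sin_sq_pos hr θ)).ne'
  convert! (hasDerivAt_id θ).add
    ((hasDerivAt_arcsin h.1.ne' h.2.ne).comp θ ((hasDerivAt_sin θ).const_mul r)) using 1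
  rw [landenSide, mul_pow]
  field_simp

theorem integral_sin_rpow_mul_one_add_sq_add_two_mul_cos_rpow (hr : |r| < 1) (s : ℝ) :
    ∫ θ in (0 : ℝ)..π, sin θ ^ s * (1 + r ^ 2 + 2 * r * cos θ) ^ (-(s + 1) / 2) =
      ∫ θ in (0 : ℝ)..π, sin θ ^ s * (1 / √(1 - r ^ 2 * sin θ ^ 2)) := by
  have hsubst := intervalIntegral.integral_comp_mul_deriv_of_deriv_nonneg (a := 0) (b := π)
    (f := landenAngle r) (g := fun θ => sin θ ^ s * (1 + r ^ 2 + 2 * r * cos θ) ^ (-(s + 1) / 2))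
    (fun θ _ => (hasDerivAt_landenAngle hr θ).continuousAt.continuousWithinAt)
    (fun θ _ => hasDerivAt_landenAngle hr θ)
    (fun θ _ => div_nonneg (landenSide_pos hr θ).le (sqrt_nonneg _))
  have hzero : landenAngle r 0 = 0 := by simp [landenAngle]
  have hpi : landenAngle r π = π := by simp [landenAngle]
  rw [hzero, hpi] at hsubst
  rw [← hsubst]
  refine intervalIntegral.integral_congr fun θ hθ => ?_
  have hsin : 0 ≤ sin θ := sin_nonneg_of_mem_Icc (uIcc_of_le pi_pos.le ▸ hθ)
  have hside := landenSide_pos hr θ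
  have hcancel :
      landenSide r θ ^ s * (landenSide r θ ^ 2) ^ (-(s + 1) / 2) * landenSide r θ = 1 := by
    rw [← rpow_natCast_mul hside.le, ← rpow_add hside, ← rpow_add_one hside.ne']
    convert rpow_zero _ using 2
    push_cast
    ring
  simp only [Function.comp_apply]
  rw [sin_landenAngle hr, one_add_sq_add_two_mul_cos_landenAngle hr, mul_rpow hsin hside.le]
  linear_combination sin θ ^ s / √(1 - r ^ 2 * sin θ ^ 2) * hcancel

end Landen

theorem rpow_mul_twoF1_eq_sinMean {h r : ℝ} (hh : 0 < h) (hr0 : 0 ≤ r) (hr1 : r < 1) :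
    (4 * r / (1 + r) ^ 2) ^ h * twoF1 h h (2 * h) (4 * r / (1 + r) ^ 2) =
      (4 * r) ^ h * sinMean (2 * h - 1) fun θ => 1 / √(1 - r ^ 2 * sin θ ^ 2) := by
  have hr : |r| < 1 := abs_lt.2 ⟨by linarith, hr1⟩
  have hx : |4 * r / (1 + r) ^ 2| < 1 := by
    rw [abs_of_nonneg (by positivity), div_lt_one (by positivity)]
    linear_combination sq_pos_of_pos (sub_pos.2 hr1)
  have hlanden := integral_sin_rpow_mul_one_add_sq_add_two_mul_cos_rpow hr (2 * h - 1)
  rw [show -(2 * h - 1 + 1) / 2 = -h by ring] at hlanden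
  have hintegrand (θ : ℝ) : (1 - 4 * r / (1 + r) ^ 2 * ((1 - cos θ) / 2)) ^ (-h) =
      ((1 + r) ^ 2) ^ h * (1 + r ^ 2 + 2 * r * cos θ) ^ (-h) := by
    have hbase : 0 ≤ 1 + r ^ 2 + 2 * r * cos θ := by
      linear_combination sq_nonneg (1 - r) + 2 * r * neg_one_le_cos θ
    rw [show 1 - 4 * r / (1 + r) ^ 2 * ((1 - cos θ) / 2) =
        (1 + r ^ 2 + 2 * r * cos θ) / (1 + r) ^ 2 by field_simp; ring,
      div_rpow hbase (by positivity), rpow_neg (sq_nonneg (1 + r)), div_inv_eq_mul, mul_comm]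
  have hmean : twoF1 h h (2 * h) (4 * r / (1 + r) ^ 2) = ((1 + r) ^ 2) ^ h *
      sinMean (2 * h - 1) fun θ => 1 / √(1 - r ^ 2 * sin θ ^ 2) := by
    rw [twoF1_eq_sinMean hh hx]
    simp only [hintegrand]
    rw [sinMean_const_mul, sinMean, sinMean, hlanden]
  rw [hmean, div_rpow (by positivity) (by positivity)]
  field_simp

/-- The radial coordinate `ρ` of the cross-ratio `w`, characterised by `w = 4ρ / (1 + ρ)²`. -/
noncomputable def radialCoord (w : ℝ) : ℝ :=
  (1 - √(1 - w)) / (1 + √(1 - w))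

lemma radialCoord_pos {w : ℝ} (hw : 0 < w) : 0 < radialCoord w := by
  have hlt : √(1 - w) < 1 := by rw [sqrt_lt' one_pos]; linarith
  exact div_pos (sub_pos.2 hlt) (by positivity)

lemma radialCoord_lt_one {w : ℝ} (hw : w < 1) : radialCoord w < 1 := by
  have hpos : 0 < √(1 - w) := sqrt_pos.2 (sub_pos.2 hw)
  rw [radialCoord, div_lt_one (by positivity)]
  linarith

lemma four_mul_radialCoord_div_one_add_sq {w : ℝ} (hw : w ≤ 1) :
    4 * radialCoord w / (1 + radialCoord w) ^ 2 = w := by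
  have hsq : √(1 - w) ^ 2 = 1 - w := sq_sqrt (sub_nonneg.2 hw)
  have hadd : 1 + radialCoord w = 2 / (1 + √(1 - w)) := by
    rw [radialCoord]
    field_simp
    ring
  rw [hadd, radialCoord]
  field_simp
  linarith

lemma tendsto_sinMean_one_div_sqrt {r : ℝ} (hr : |r| < 1) :
    Tendsto (fun s => sinMean s fun θ => 1 / √(1 - r ^ 2 * sin θ ^ 2)) atTop
      (𝓝 (1 / √(1 - r ^ 2))) := by
  have hroot (θ : ℝ) : √(1 - r ^ 2 * sin θ ^ 2) ≠ 0 :=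
    (sqrt_pos.2 (one_sub_sq_mul_sin_sq_pos hr θ)).ne'
  have hcont : Continuous fun θ => 1 / √(1 - r ^ 2 * sin θ ^ 2) := by
    fun_prop (disch := assumption)
  simpa only [sin_pi_div_two, one_pow, mul_one] using tendsto_sinMean_atTop hcont.continuousOn

end

/-- Watson's asymptotics: for fixed `w ∈ (0,1)`,
`k_h(w) = w^h ₂F₁(h,h;2h;w) ∼ (4ρ)^h / √(1−ρ²)` as `h → ∞`. -/
theorem watson_block_asymptotics (w : ℝ) (hw0 : 0 < w) (hw1 : w < 1) :
    Tendsto (fun h : ℝ =>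
        (w ^ h * twoF1 h h (2 * h) w) /
          ((4 * ((1 - Real.sqrt (1 - w)) / (1 + Real.sqrt (1 - w)))) ^ h /
            Real.sqrt (1 - ((1 - Real.sqrt (1 - w)) / (1 + Real.sqrt (1 - w))) ^ 2)))
      atTop (nhds 1) := by
  change Tendsto (fun h : ℝ => w ^ h * twoF1 h h (2 * h) w /
    ((4 * radialCoord w) ^ h / √(1 - radialCoord w ^ 2))) atTop (𝓝 1)
  have hρ0 := radialCoord_pos hw0
  have hρ1 := radialCoord_lt_one hw1
  have hw := four_mul_radialCoord_div_one_add_sq hw1.le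
  generalize radialCoord w = ρ at *
  have hroot : √(1 - ρ ^ 2) ≠ 0 :=
    (Real.sqrt_pos.2 (sub_pos.2 (pow_lt_one₀ hρ0.le hρ1 two_ne_zero))).ne'
  have hexponent : Tendsto (fun h : ℝ => 2 * h - 1) atTop atTop :=
    tendsto_atTop_add_const_right _ _ (tendsto_id.const_mul_atTop two_pos)
  have hmean := ((tendsto_sinMean_one_div_sqrt (abs_lt.2 ⟨by linarith, hρ1⟩)).comp
    hexponent).mul_const √(1 - ρ ^ 2)
  rw [one_div_mul_cancel hroot] at hmean
  refine hmean.congr' ?_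
  filter_upwards [eventually_gt_atTop 0] with h hh
  have hblock := rpow_mul_twoF1_eq_sinMean hh hρ0.le hρ1
  rw [hw] at hblock
  rw [hblock, Function.comp_apply]
  field_simp
end

section
/- ∑_{k=1}^∞ 1/(2 sinh(kπ))² = (1/8)(1/3 − 1/π). -/
/-!
The Lambert form of the `q`-expansion of the weight-two Eisenstein series `E₂` is
`E₂ z = 1 + 24 ∑ 1 / (2 sin (n π z))²`, and on the imaginary axis the sines become hyperbolic sines.
Since `i` is fixed by `z ↦ -1 / z` and the quasi-modular law
`E₂ (-1 / z) = z² E₂ z - 6 i z / π` carries the factor `i² = -1`, it forces `E₂ i = 3 / π`.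
-/

section WeightTwoEisenstein

open ArithmeticFunction.sigma Complex EisensteinSeries ModularGroup
open UpperHalfPlane hiding I
open scoped Real

theorem tsum_pow_div_one_sub_sq_eq_tsum_sigma_one {𝕜 : Type*} [NontriviallyNormedField 𝕜]
    [CompleteSpace 𝕜] [NormSMulClass ℤ 𝕜] {q : 𝕜} (hq : ‖q‖ < 1) :
    ∑' n : ℕ+, q ^ (n : ℕ) / (1 - q ^ (n : ℕ)) ^ 2 = ∑' n : ℕ+, (σ 1 n : 𝕜) * q ^ (n : ℕ) := by
  rw [← tsum_prod_pow_eq_tsum_sigma 1 hq]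
  refine tsum_congr fun d ↦ ?_
  have hqd : ‖q ^ (d : ℕ)‖ < 1 := by
    rw [norm_pow]
    exact pow_lt_one₀ (norm_nonneg q) hq d.ne_zero
  have hsum := hasSum_coe_mul_geometric_of_norm_lt_one hqd
  rw [← hsum.tsum_eq, ← tsum_zero_pnat_eq_tsum_nat hsum.summable]
  simp only [Nat.cast_zero, zero_mul, zero_add, pow_one, pow_mul]

-- When `sin w = 0`, both sides take the junk value `0`.
theorem cexp_div_one_sub_cexp_sq (w : ℂ) :
    cexp (2 * I * w) / (1 - cexp (2 * I * w)) ^ 2 = -(1 / (2 * sin w) ^ 2) := by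
  have hexp : cexp (2 * I * w) = cexp (w * I) ^ 2 := by
    rw [← exp_nat_mul]
    ring_nf
  have hsin : 2 * sin w = (1 - cexp (w * I) ^ 2) / cexp (w * I) * I := by
    rw [two_sin, neg_mul, exp_neg]
    field_simp [exp_ne_zero]
  rw [hexp, hsin, mul_pow, I_sq, div_pow, mul_neg_one, div_neg, neg_neg, one_div_div]

theorem E2_eq_one_add_tsum_one_div_sin_sq (z : ℍ) :
    E2 z = 1 + 24 * ∑' n : ℕ+, 1 / (2 * sin (n * (π * z))) ^ 2 := by
  rw [E2_eq_tsum_cexp, ← tsum_pow_div_one_sub_sq_eq_tsum_sigma_one (norm_exp_two_pi_I_lt_one z),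
    sub_eq_add_neg, ← mul_neg, ← tsum_neg]
  congr 2
  refine tsum_congr fun n ↦ ?_
  have hexp : cexp (2 * π * I * z) ^ (n : ℕ) = cexp (2 * I * (n * (π * z))) := by
    rw [← exp_nat_mul]
    ring_nf
  rw [hexp, cexp_div_one_sub_cexp_sq, neg_neg]

theorem E2_eq_one_sub_tsum_one_div_sinh_sq {z : ℍ} (hz : z.re = 0) :
    E2 z = (1 - 24 * ∑' n : ℕ+, 1 / (2 * Real.sinh (n * (π * z.im))) ^ 2 : ℝ) := by
  have hz' : (z : ℂ) = z.im * I := by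
    simp [Complex.ext_iff, hz]
  rw [E2_eq_one_add_tsum_one_div_sin_sq, sub_eq_add_neg, ← mul_neg, ← tsum_neg]
  push_cast
  congr 2
  refine tsum_congr fun n ↦ ?_
  have hsin : 2 * sin (n * (π * z)) = 2 * sinh (n * (π * z.im)) * I := by
    rw [hz', ← mul_assoc (π : ℂ), ← mul_assoc (n : ℂ), sin_mul_I, mul_assoc]
  rw [hsin, mul_pow _ I, I_sq, mul_neg_one, div_neg]

theorem E2_S_smul (z : ℍ) : E2 (S • z) = z ^ 2 * E2 z - 6 * I * z / π := by
  have hz : (z : ℂ) ≠ 0 := ne_zero z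
  have hπ : (π : ℂ) ≠ 0 := ofReal_ne_zero.mpr Real.pi_ne_zero
  simp only [E2, Pi.smul_apply, smul_eq_mul, riemannZeta_two, G2_S_transform z]
  field_simp
  ring

theorem E2_I : E2 UpperHalfPlane.I = 3 / π := by
  have h := E2_S_smul UpperHalfPlane.I
  have hS : S • UpperHalfPlane.I = UpperHalfPlane.I := stabilizer_I.mpr (by simp)
  rw [hS, coe_I, mul_assoc, I_mul_I, I_sq] at h
  linear_combination h / 2

end WeightTwoEisenstein

theorem sinh_series_eval :
    ∑' k : ℕ, (1 / (2 * Real.sinh ((k + 1) * Real.pi)) ^ 2) =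
      (1 / 8) * (1 / 3 - 1 / Real.pi) := by
  have hE2 := E2_eq_one_sub_tsum_one_div_sinh_sq UpperHalfPlane.I_re
  rw [E2_I, UpperHalfPlane.I_im, mul_one,
    tsum_pnat_eq_tsum_succ (f := fun n ↦ 1 / (2 * Real.sinh (n * Real.pi)) ^ 2)] at hE2
  have h : 3 / Real.pi =
      1 - 24 * ∑' k : ℕ, 1 / (2 * Real.sinh ((k + 1) * Real.pi)) ^ 2 := by
    exact_mod_cast hE2
  linear_combination h / 24
end
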